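/- Let K(x)=±1/|x| on ℝ³ and let ρ ∈ L¹(ℝ³) ∩ L^∞(ℝ³) be nonnegative. Then the force field E = ∇K ∗ ρ is log-Lipschitz: there is a constant C > 0 depending only on ‖ρ‖_{L¹} + ‖ρ‖_{L^∞} such that for all x₁ ≠ x₂ in ℝ³, |E(x₁) − E(x₂)| ≤ C |x₁ − x₂| max(1, −ln|x₁ − x₂|). -/

import Mathlib

open MeasureTheory Real NNReal ENNReal RealInnerProductSpace
noncomputable section

/-- Physical space `ℝ³`. -/
abbrev E3 := EuclideanSpace ℝ (Fin 3)
/-- Phase space `ℝ⁶ = ℝ³ × ℝ³`. -/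
abbrev Z6 := E3 × E3

/-- `∇K` for the Coulomb kernel `K(x) = σ/|x|` (σ = ±1): `∇K(x) = -σ x/|x|³`. -/
noncomputable def gradK (σ : ℝ) (x : E3) : E3 := (-σ / ‖x‖ ^ 3) • x

/-- Spatial density `ρ_f(x) = ∫ f(x,ξ) dξ`. -/
noncomputable def rhoDen (f : E3 → E3 → ℝ) (x : E3) : ℝ := ∫ ξ : E3, f x ξ

/-- Self-induced force field `E_f = ∇K ∗ ρ_f`. -/
noncomputable def force (σ : ℝ) (f : E3 → E3 → ℝ) (x : E3) : E3 :=
  ∫ y : E3, rhoDen f y • gradK σ (x - y)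

/-- Gradient in the position variable. -/
noncomputable def gradX (f : E3 → E3 → ℝ) (x ξ : E3) : E3 := gradient (fun x' => f x' ξ) x

/-- Gradient in the velocity variable `∇_ξ f`. -/
noncomputable def gradV (f : E3 → E3 → ℝ) (x ξ : E3) : E3 := gradient (fun ξ' => f x ξ') ξ

/-- `f` is a nonnegative solution of the Vlasov–Poisson equation
`∂_t f + ξ·∇_x f + E_f·∇_ξ f = 0` for times in the set `S`. -/
noncomputable def IsVPSolutionOn (σ : ℝ) (S : Set ℝ) (f : ℝ → E3 → E3 → ℝ) : Prop :=
  (∀ t ∈ S, ∀ x ξ : E3, 0 ≤ f t x ξ) ∧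
  ∀ t ∈ S, ∀ x ξ : E3,
    deriv (fun s => f s x ξ) t + ⟪ξ, gradX (f t) x ξ⟫ +
      ⟪force σ (f t) x, gradV (f t) x ξ⟫ = 0

/-- The Lorentz `L^{3,1}(ℝ³)` (quasi-)norm of a real valued function,
`∫₀^∞ |{|g| > s}|^{1/3} ds`. -/
noncomputable def lorentz31 (g : E3 → ℝ) : ℝ≥0∞ :=
  ∫⁻ s in Set.Ioi (0:ℝ), (volume {x : E3 | s < |g x|}) ^ ((1:ℝ)/3)

/-- The weak `L^{3/2,∞}(ℝ³)` (quasi-)norm of a vector field,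
`sup_{s>0} s |{|g| > s}|^{2/3}`. -/
noncomputable def weakL32 (g : E3 → E3) : ℝ≥0∞ :=
  ⨆ s : ℝ≥0, (s : ℝ≥0∞) * (volume {x : E3 | (s : ℝ) < ‖g x‖}) ^ ((2:ℝ)/3)

/-- The function `x ↦ ∫ |∇_ξ f(x,ξ)| dξ`. -/
noncomputable def xiMargGradNorm (f : E3 → E3 → ℝ) (x : E3) : ℝ := ∫ ξ : E3, ‖gradV f x ξ‖

/-- `λ_f = ‖∇_ξ f‖_{L^{3,1}_x L¹_ξ}`. -/
noncomputable def lambdaL1 (f : E3 → E3 → ℝ) : ℝ≥0∞ := lorentz31 (xiMargGradNorm f)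

/-- `L¹(ℝ⁶)` distance of two phase-space functions. -/
noncomputable def L1diff (f g : E3 → E3 → ℝ) : ℝ≥0∞ := ∫⁻ z : Z6, ‖f z.1 z.2 - g z.1 z.2‖₊

/-- Pointwise square root of a phase-space density. -/
noncomputable def sqrtF (f : E3 → E3 → ℝ) (x ξ : E3) : ℝ := Real.sqrt (f x ξ)

/-- `‖∇_ξ g‖_{L³_x L²_ξ}`. -/
noncomputable def L3L2grad (g : E3 → E3 → ℝ) : ℝ≥0∞ :=
  (∫⁻ x : E3, (∫⁻ ξ : E3, ((‖gradV g x ξ‖₊ : ℝ≥0∞)) ^ (2:ℝ)) ^ ((3:ℝ)/2)) ^ ((1:ℝ)/3)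

/-- `λ_f` for the L² weak-strong estimate:
`‖ρ_f‖_{L^∞}^{1/2} ‖∇_ξ √f‖_{L³_x L²_ξ} + C_∞^{1/2} ‖∇_ξ √f‖_{L^{3,1}_x L¹_ξ}`. -/
noncomputable def lambdaL2 (Cinf : ℝ) (f : E3 → E3 → ℝ) : ℝ≥0∞ :=
  (eLpNorm (rhoDen f) ⊤ volume) ^ ((1:ℝ)/2) * L3L2grad (sqrtF f)
    + ENNReal.ofReal (Real.sqrt Cinf) * lorentz31 (xiMargGradNorm (sqrtF f))

/-!
In dimension `n`, a Coulomb kernel changes between `x₁ - y` and `x₂ - y`, at distance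
`d = ‖x₁ - x₂‖`, by at most a constant times `min (1 / r ^ (n - 1)) (d / r ^ n)`, where `r` is the
distance from `y` to the nearer of `x₁` and `x₂`. Where `r < 1`, the density is replaced by its
supremum, and polar coordinates turn the minimum into the integral of `min 1 (d / r)` over `(0, 1)`.
For `d < 1` its two terms cross at `r = d`, so this integral equals `d - d * log d`. Where `r ≥ 1`,
the minimum is at most `d`, and the remaining factor is the `L¹` norm of the density.
-/

open Metric Set Module

section ModelKernel

variable {E : Type*} [NormedAddCommGroup E] [NormedSpace ℝ E]

lemma one_div_pow_sub_one_div_pow_mul_le (n : ℕ) {s t : ℝ} (ht : 0 < t) (hts : t ≤ s) :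
    (1 / t ^ n - 1 / s ^ n) * t ≤ n * ((s - t) / t ^ n) := by
  have hs : 0 < s := ht.trans_le hts
  have bernoulli : 1 - n * ((s - t) / s) ≤ (t / s) ^ n := by
    have h := one_add_mul_le_pow (a := t / s - 1) (by linarith [div_pos ht hs]) n
    rw [add_sub_cancel] at h
    have hsub_div : 1 - n * ((s - t) / s) = 1 + n * (t / s - 1) := by
      field_simp
      ring
    exact hsub_div.trans_le h
  have hratio : (s - t) / s * t ≤ s - t := by
    rw [div_mul_eq_mul_div, div_le_iff₀ hs]
    exact mul_le_mul_of_nonneg_left hts (sub_nonneg.2 hts)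
  calc (1 / t ^ n - 1 / s ^ n) * t = (1 - (t / s) ^ n) * t / t ^ n := by
        rw [div_pow]
        field_simp
    _ ≤ n * ((s - t) / s) * t / t ^ n := by gcongr; linarith
    _ = n * ((s - t) / s * t) / t ^ n := by ring
    _ ≤ n * (s - t) / t ^ n := by gcongr
    _ = n * ((s - t) / t ^ n) := mul_div_assoc _ _ _

lemma norm_one_div_pow_smul_sub_le (n : ℕ) {a b : E} (hb : b ≠ 0) (hba : ‖b‖ ≤ ‖a‖) :
    ‖(1 / ‖a‖ ^ n) • a - (1 / ‖b‖ ^ n) • b‖ ≤ (n + 1) * (‖a - b‖ / ‖b‖ ^ n) := by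
  have hb' : 0 < ‖b‖ := norm_pos_iff.2 hb
  have hle : 1 / ‖a‖ ^ n ≤ 1 / ‖b‖ ^ n := by gcongr
  calc ‖(1 / ‖a‖ ^ n) • a - (1 / ‖b‖ ^ n) • b‖
      = ‖(1 / ‖a‖ ^ n) • (a - b) - (1 / ‖b‖ ^ n - 1 / ‖a‖ ^ n) • b‖ := by congr 1; module
    _ ≤ 1 / ‖a‖ ^ n * ‖a - b‖ + (1 / ‖b‖ ^ n - 1 / ‖a‖ ^ n) * ‖b‖ := by
        refine (norm_sub_le _ _).trans_eq ?_
        rw [norm_smul_of_nonneg (by positivity), norm_smul_of_nonneg (sub_nonneg.2 hle)]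
    _ ≤ 1 / ‖b‖ ^ n * ‖a - b‖ + n * ((‖a‖ - ‖b‖) / ‖b‖ ^ n) := by
        gcongr ?_ + ?_
        · gcongr
        · exact one_div_pow_sub_one_div_pow_mul_le n hb' hba
    _ ≤ 1 / ‖b‖ ^ n * ‖a - b‖ + n * (‖a - b‖ / ‖b‖ ^ n) := by
        gcongr
        exact norm_sub_norm_le a b
    _ = (n + 1) * (‖a - b‖ / ‖b‖ ^ n) := by ring

end ModelKernel

section CoulombKernel

variable {E F : Type*} [NormedAddCommGroup E] [NormedSpace ℝ E] [MeasurableSpace E]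
  [NormedAddCommGroup F]

/-- A kernel on an `n`-dimensional space with the size and the regularity of the Coulomb force
`x / ‖x‖ ^ n`. Nothing is required of the value at the origin. -/
structure IsCoulombKernel (A : ℝ≥0) (K : E → F) : Prop where
  stronglyMeasurable : StronglyMeasurable K
  norm_le : ∀ x, x ≠ 0 → ‖K x‖ ≤ A * (1 / ‖x‖ ^ (finrank ℝ E - 1))
  norm_sub_le : ∀ a b, b ≠ 0 → ‖b‖ ≤ ‖a‖ → ‖K a - K b‖ ≤ A * (‖a - b‖ / ‖b‖ ^ finrank ℝ E)

/-- The size, up to constants, of the increment of a Coulomb kernel in dimension `n` over a step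
of length `d` taken at distance `r` from the origin. -/
def incrementMajorant (n : ℕ) (d r : ℝ) : ℝ := min (1 / r ^ (n - 1)) (d / r ^ n)

lemma incrementMajorant_nonneg (n : ℕ) {d r : ℝ} (hd : 0 ≤ d) (hr : 0 ≤ r) :
    0 ≤ incrementMajorant n d r := by
  rw [incrementMajorant]
  positivity

lemma isCoulombKernel_one_div_norm_pow_finrank_smul [FiniteDimensional ℝ E] [Nontrivial E]
    [BorelSpace E] :
    IsCoulombKernel (finrank ℝ E + 1) fun x : E ↦ (1 / ‖x‖ ^ finrank ℝ E) • x where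
  stronglyMeasurable := by
    have : Measurable fun x : E ↦ 1 / ‖x‖ ^ finrank ℝ E := by fun_prop
    exact this.stronglyMeasurable.smul stronglyMeasurable_id
  norm_le x hx := by
    have hcancel : 1 / ‖x‖ ^ finrank ℝ E * ‖x‖ = 1 / ‖x‖ ^ (finrank ℝ E - 1) := by
      rw [← pow_sub_one_mul (finrank_pos (R := ℝ) (M := E)).ne' ‖x‖]
      field_simp
    rw [norm_smul_of_nonneg (by positivity), hcancel]
    exact le_mul_of_one_le_left (by positivity) (by simp)
  norm_sub_le a b hb hba := by
    simpa using norm_one_div_pow_smul_sub_le (finrank ℝ E) hb hba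

namespace IsCoulombKernel

variable {A : ℝ≥0} {K : E → F}

lemma const_smul [NormedSpace ℝ F] (hK : IsCoulombKernel A K) (c : ℝ) :
    IsCoulombKernel (‖c‖₊ * A) (c • K) where
  stronglyMeasurable := hK.stronglyMeasurable.const_smul c
  norm_le x hx := by
    rw [Pi.smul_apply, norm_smul, NNReal.coe_mul, coe_nnnorm, mul_assoc]
    gcongr
    exact hK.norm_le x hx
  norm_sub_le a b hb hba := by
    rw [Pi.smul_apply, Pi.smul_apply, ← smul_sub, norm_smul, NNReal.coe_mul, coe_nnnorm,
      mul_assoc]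
    gcongr
    exact hK.norm_sub_le a b hb hba

lemma norm_sub_le_incrementMajorant (hK : IsCoulombKernel A K) {a b : E} (ha : a ≠ 0)
    (hb : b ≠ 0) :
    ‖K a - K b‖ ≤ 2 * A * (incrementMajorant (finrank ℝ E) ‖a - b‖ ‖a‖ +
      incrementMajorant (finrank ℝ E) ‖a - b‖ ‖b‖) := by
  wlog hba : ‖b‖ ≤ ‖a‖ generalizing a b
  · rw [norm_sub_rev (K a), norm_sub_rev a, add_comm]
    exact this hb ha (le_of_not_ge hba)
  have hsize : ‖K a - K b‖ ≤ 2 * A * (1 / ‖b‖ ^ (finrank ℝ E - 1)) :=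
    calc ‖K a - K b‖ ≤ ‖K a‖ + ‖K b‖ := _root_.norm_sub_le _ _
      _ ≤ A * (1 / ‖a‖ ^ (finrank ℝ E - 1)) + A * (1 / ‖b‖ ^ (finrank ℝ E - 1)) :=
        add_le_add (hK.norm_le a ha) (hK.norm_le b hb)
      _ ≤ A * (1 / ‖b‖ ^ (finrank ℝ E - 1)) + A * (1 / ‖b‖ ^ (finrank ℝ E - 1)) := by gcongr
      _ = 2 * A * (1 / ‖b‖ ^ (finrank ℝ E - 1)) := by ring
  have hincrement : ‖K a - K b‖ ≤ 2 * A * (‖a - b‖ / ‖b‖ ^ finrank ℝ E) := by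
    refine (hK.norm_sub_le a b hb hba).trans ?_
    gcongr
    exact le_mul_of_one_le_left A.coe_nonneg one_le_two
  calc ‖K a - K b‖ ≤ 2 * A * incrementMajorant (finrank ℝ E) ‖a - b‖ ‖b‖ := by
        rw [incrementMajorant, mul_min_of_nonneg _ _ (by positivity)]
        exact le_min hsize hincrement
    _ ≤ _ := by
        gcongr
        exact le_add_of_nonneg_left (incrementMajorant_nonneg _ (norm_nonneg _) (norm_nonneg _))

end IsCoulombKernel

lemma isCoulombKernel_gradK (σ : ℝ) :
    IsCoulombKernel (‖σ‖₊ * (finrank ℝ E3 + 1)) (gradK σ) := by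
  rw [← nnnorm_neg]
  convert (isCoulombKernel_one_div_norm_pow_finrank_smul (E := E3)).const_smul (-σ) using 1
  ext1 x
  simp [gradK, smul_smul, div_eq_mul_inv]

end CoulombKernel

section Majorant

variable {d : ℝ}

lemma incrementMajorant_le_of_one_le (n : ℕ) (hd : 0 ≤ d) {r : ℝ} (hr : 1 ≤ r) :
    incrementMajorant n d r ≤ d :=
  (min_le_right _ _).trans (div_le_self hd (one_le_pow₀ hr))

lemma norm_incrementMajorant_norm_le_of_notMem_ball {E : Type*} [SeminormedAddCommGroup E] (n : ℕ)
    (hd : 0 ≤ d) : ∀ z ∉ ball (0 : E) 1, ‖incrementMajorant n d ‖z‖‖ ≤ d := fun z hz ↦ by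
  rw [norm_of_nonneg (incrementMajorant_nonneg n hd (norm_nonneg z))]
  exact incrementMajorant_le_of_one_le n hd (by simpa using hz)

lemma pow_sub_one_mul_incrementMajorant {n : ℕ} (hn : n ≠ 0) {r : ℝ} (hr : 0 < r) :
    r ^ (n - 1) * incrementMajorant n d r = min 1 (d / r) := by
  rw [incrementMajorant, mul_min_of_nonneg _ _ (by positivity), ← pow_sub_one_mul hn r]
  congr 1 <;> field_simp

lemma integrableOn_min_one_div {s : Set ℝ} (hd : 0 ≤ d) (hs : s ⊆ Ioi 0) (hsm : MeasurableSet s)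
    (hvol : volume s ≠ ∞) : IntegrableOn (fun r ↦ min 1 (d / r)) s := by
  refine Measure.integrableOn_of_bounded (M := 1) hvol ?_ ?_
  · exact (by fun_prop : Measurable fun r : ℝ ↦ min 1 (d / r)).aestronglyMeasurable
  · filter_upwards [ae_restrict_mem hsm] with r hr
    have : 0 < r := hs hr
    rw [norm_of_nonneg (by positivity)]
    exact min_le_left _ _

lemma neg_log_min_one_le_max (d : ℝ) : -log (min d 1) ≤ max 1 (-log d) := by
  rcases le_total d 1 with h | h
  · simp [min_eq_left h]
  · simp [min_eq_right h]

lemma setIntegral_Ioo_min_one_div_le (hd : 0 < d) :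
    ∫ r in Ioo 0 1, min 1 (d / r) ≤ 2 * (d * max 1 (-log d)) := by
  set e := min d 1
  have he : 0 < e := lt_min hd one_pos
  have he1 : e ≤ 1 := min_le_right _ _
  have hint {a b : ℝ} (ha : 0 ≤ a) (hab : a ≤ b) :
      IntervalIntegrable (fun r ↦ min 1 (d / r)) volume a b :=
    (intervalIntegrable_iff_integrableOn_Ioc_of_le hab).2 <|
      integrableOn_min_one_div hd.le (fun r hr ↦ ha.trans_lt hr.1) measurableSet_Ioc (by simp)
  have hnear : ∫ r in 0..e, min 1 (d / r) ≤ e := by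
    simpa using intervalIntegral.integral_mono_on he.le (hint le_rfl he.le)
      intervalIntegrable_const fun r _ ↦ min_le_left 1 (d / r)
  have hfar : ∫ r in e..1, min 1 (d / r) ≤ d * -log e := by
    have hdiv : IntervalIntegrable (fun r ↦ d * (1 / r)) volume e 1 :=
      (intervalIntegral.intervalIntegrable_one_div (fun r hr ↦ by
        rw [uIcc_of_le he1] at hr; exact (he.trans_le hr.1).ne') continuousOn_id).const_mul d
    refine (intervalIntegral.integral_mono_on he1 (hint he.le he1) hdiv fun r _ ↦
      (min_le_right 1 (d / r)).trans_eq (mul_one_div d r).symm).trans_eq ?_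
    rw [intervalIntegral.integral_const_mul, integral_one_div_of_pos he one_pos]
    simp
  calc ∫ r in Ioo 0 1, min 1 (d / r)
      = (∫ r in 0..e, min 1 (d / r)) + ∫ r in e..1, min 1 (d / r) := by
        rw [intervalIntegral.integral_add_adjacent_intervals (hint le_rfl he.le) (hint he.le he1),
          intervalIntegral.integral_of_le zero_le_one, integral_Ioc_eq_integral_Ioo]
    _ ≤ e + d * -log e := add_le_add hnear hfar
    _ ≤ d * max 1 (-log d) + d * max 1 (-log d) := by
        gcongr
        · exact (min_le_left d 1).trans (le_mul_of_one_le_right hd.le (le_max_left _ _))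
        · exact neg_log_min_one_le_max d
    _ = 2 * (d * max 1 (-log d)) := (two_mul _).symm

end Majorant

section Radial

variable {E : Type*} [NormedAddCommGroup E] [NormedSpace ℝ E] [FiniteDimensional ℝ E]
  [Nontrivial E] [MeasurableSpace E] [BorelSpace E] (μ : Measure E) [μ.IsAddHaarMeasure]

lemma setIntegral_ball_fun_norm_addHaar {F : Type*} [NormedAddCommGroup F] [NormedSpace ℝ F]
    (f : ℝ → F) (R : ℝ) :
    ∫ x in ball (0 : E) R, f ‖x‖ ∂μ =
      finrank ℝ E • μ.real (ball 0 1) • ∫ r in Ioo 0 R, r ^ (finrank ℝ E - 1) • f r := by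
  have hball : ∀ x : E, (ball 0 R).indicator (fun x ↦ f ‖x‖) x = (Iio R).indicator f ‖x‖ :=
    fun x ↦ by simp [indicator]
  rw [← integral_indicator measurableSet_ball, funext hball, integral_fun_norm_addHaar,
    ← Ioi_inter_Iio, ← setIntegral_indicator measurableSet_Iio]
  simp only [indicator_smul]

lemma integrableOn_ball_incrementMajorant {d : ℝ} (hd : 0 ≤ d) :
    IntegrableOn (fun z : E ↦ incrementMajorant (finrank ℝ E) d ‖z‖) (ball 0 1) μ := by
  rw [integrableOn_fun_norm_addHaar μ]
  refine (integrableOn_min_one_div hd Ioo_subset_Ioi_self measurableSet_Ioo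
    (by simp)).congr_fun (fun r hr ↦ ?_) measurableSet_Ioo
  exact (pow_sub_one_mul_incrementMajorant finrank_pos.ne' hr.1).symm

lemma setIntegral_ball_incrementMajorant_le {d : ℝ} (hd : 0 < d) :
    ∫ z in ball (0 : E) 1, incrementMajorant (finrank ℝ E) d ‖z‖ ∂μ ≤
      2 * (finrank ℝ E * μ.real (ball 0 1)) * (d * max 1 (-log d)) :=
  calc ∫ z in ball (0 : E) 1, incrementMajorant (finrank ℝ E) d ‖z‖ ∂μ
      = finrank ℝ E * μ.real (ball 0 1) * ∫ r in Ioo 0 1, min 1 (d / r) := by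
        rw [setIntegral_ball_fun_norm_addHaar μ (incrementMajorant _ d), nsmul_eq_mul, smul_eq_mul,
          ← mul_assoc]
        congr 1
        exact setIntegral_congr_fun measurableSet_Ioo fun r hr ↦
          pow_sub_one_mul_incrementMajorant finrank_pos.ne' hr.1
    _ ≤ finrank ℝ E * μ.real (ball 0 1) * (2 * (d * max 1 (-log d))) := by
        gcongr
        exact setIntegral_Ioo_min_one_div_le hd
    _ = 2 * (finrank ℝ E * μ.real (ball 0 1)) * (d * max 1 (-log d)) := by ring

lemma IsCoulombKernel.integrableOn_ball {F : Type*} [NormedAddCommGroup F] {A : ℝ≥0} {K : E → F}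
    (hK : IsCoulombKernel A K) : IntegrableOn K (ball 0 1) μ := by
  refine ((integrableOn_ball_incrementMajorant μ zero_le_one).const_mul (A : ℝ)).mono'
    hK.stronglyMeasurable.aestronglyMeasurable ?_
  filter_upwards [ae_restrict_mem measurableSet_ball,
    ae_restrict_of_ae (Measure.ae_ne μ (0 : E))] with z hz hz0
  refine (hK.norm_le z hz0).trans_eq ?_
  have hz1 : ‖z‖ ≤ 1 := (mem_ball_zero_iff.1 hz).le
  have hz' : 0 < ‖z‖ := norm_pos_iff.2 hz0
  rw [incrementMajorant, min_eq_left]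
  gcongr 1 / ?_
  exact pow_le_pow_of_le_one hz'.le hz1 (Nat.sub_le _ _)

end Radial

section NearFar

variable {G F : Type*} [AddGroup G] [MeasurableSpace G] [NormedAddCommGroup F]
  {μ : Measure G} {ρ : G → ℝ} {K : G → F} {S : Set G} {P B : ℝ}

lemma ae_norm_smul_comp_sub_left_le [NormedSpace ℝ F] (hP : ∀ᵐ y ∂μ, ‖ρ y‖ ≤ P)
    (hB : 0 ≤ B) (hKB : ∀ z ∉ S, ‖K z‖ ≤ B) (x : G) :
    ∀ᵐ y ∂μ, ‖ρ y • K (x - y)‖ ≤ P * S.indicator (‖K ·‖) (x - y) + B * ‖ρ y‖ := by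
  filter_upwards [hP] with y hy
  rw [norm_smul]
  by_cases hz : x - y ∈ S
  · rw [indicator_of_mem hz]
    exact (mul_le_mul_of_nonneg_right hy (norm_nonneg _)).trans
      (le_add_of_nonneg_right (by positivity))
  · rw [indicator_of_notMem hz, mul_zero, zero_add, mul_comm]
    exact mul_le_mul_of_nonneg_right (hKB _ hz) (norm_nonneg _)

variable [MeasurableAdd G] [MeasurableNeg G] [μ.IsAddLeftInvariant] [μ.IsNegInvariant]

lemma integrable_near_far_majorant (hρ : Integrable ρ μ) (hS : MeasurableSet S)
    (hKS : IntegrableOn K S μ) (x : G) :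
    Integrable (fun y ↦ P * S.indicator (‖K ·‖) (x - y) + B * ‖ρ y‖) μ :=
  (((IntegrableOn.integrable_indicator hKS.norm hS).comp_sub_left x).const_mul P).add
    (hρ.norm.const_mul B)

variable [NormedSpace ℝ F]

lemma integrable_smul_comp_sub_left (hρ : Integrable ρ μ) (hP : ∀ᵐ y ∂μ, ‖ρ y‖ ≤ P)
    (hK : AEStronglyMeasurable K μ) (hS : MeasurableSet S) (hKS : IntegrableOn K S μ)
    (hB : 0 ≤ B) (hKB : ∀ z ∉ S, ‖K z‖ ≤ B) (x : G) :
    Integrable (fun y ↦ ρ y • K (x - y)) μ := by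
  have hsub : MeasurePreserving (x - ·) μ μ := μ.measurePreserving_sub_left x
  exact (integrable_near_far_majorant hρ hS hKS x).mono'
    (hρ.aestronglyMeasurable.smul (hK.comp_measurePreserving hsub))
    (ae_norm_smul_comp_sub_left_le hP hB hKB x)

lemma integral_norm_smul_comp_sub_left_le (hρ : Integrable ρ μ) (hP : ∀ᵐ y ∂μ, ‖ρ y‖ ≤ P)
    (hS : MeasurableSet S) (hKS : IntegrableOn K S μ) (hB : 0 ≤ B)
    (hKB : ∀ z ∉ S, ‖K z‖ ≤ B) (x : G) :
    ∫ y, ‖ρ y • K (x - y)‖ ∂μ ≤ P * ∫ z in S, ‖K z‖ ∂μ + B * ∫ y, ‖ρ y‖ ∂μ :=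
  calc ∫ y, ‖ρ y • K (x - y)‖ ∂μ
      ≤ ∫ y, (P * S.indicator (‖K ·‖) (x - y) + B * ‖ρ y‖) ∂μ :=
        integral_mono_of_nonneg (.of_forall fun _ ↦ norm_nonneg _)
          (integrable_near_far_majorant hρ hS hKS x) (ae_norm_smul_comp_sub_left_le hP hB hKB x)
    _ = P * ∫ z in S, ‖K z‖ ∂μ + B * ∫ y, ‖ρ y‖ ∂μ := by
        have hnear := (IntegrableOn.integrable_indicator hKS.norm hS).comp_sub_left x
        rw [integral_add (hnear.const_mul P) (hρ.norm.const_mul B), integral_const_mul,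
          integral_const_mul, integral_sub_left_eq_self (S.indicator (‖K ·‖)) μ x,
          integral_indicator hS]

end NearFar

section NormBounds

variable {α F : Type*} [MeasurableSpace α] [NormedAddCommGroup F] {μ : Measure α} {f : α → F}
  {M : ℝ≥0}

lemma integral_norm_le_of_eLpNorm_one_le (hf : AEStronglyMeasurable f μ)
    (hM : eLpNorm f 1 μ ≤ M) : ∫ x, ‖f x‖ ∂μ ≤ M := by
  rw [← lpNorm_one_eq_integral_norm hf, ← toReal_eLpNorm hf]
  exact ENNReal.toReal_le_coe_of_le_coe hM

lemma ae_norm_le_of_eLpNorm_top_le (hM : eLpNorm f ∞ μ ≤ M) : ∀ᵐ x ∂μ, ‖f x‖ ≤ M := by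
  filter_upwards [enorm_ae_le_eLpNormEssSup f μ] with x hx
  rw [← eLpNorm_exponent_top] at hx
  exact_mod_cast hx.trans hM

end NormBounds

section LogLipschitz

variable {E F : Type*} [NormedAddCommGroup E] [NormedSpace ℝ E] [FiniteDimensional ℝ E]
  [Nontrivial E] [MeasurableSpace E] [BorelSpace E] [NormedAddCommGroup F] [NormedSpace ℝ F]
  {μ : Measure E} [μ.IsAddHaarMeasure] {ρ : E → ℝ} {M : ℝ≥0} {P d : ℝ}

lemma IsCoulombKernel.integrable_smul_comp_sub_left {A : ℝ≥0} {K : E → F}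
    (hK : IsCoulombKernel A K) (hρ : Integrable ρ μ) (hP : ∀ᵐ y ∂μ, ‖ρ y‖ ≤ P) (x : E) :
    Integrable (fun y ↦ ρ y • K (x - y)) μ := by
  refine _root_.integrable_smul_comp_sub_left hρ hP hK.stronglyMeasurable.aestronglyMeasurable
    measurableSet_ball (hK.integrableOn_ball μ) A.coe_nonneg (fun z hz ↦ ?_) x
  have hz1 : 1 ≤ ‖z‖ := by simpa using hz
  refine (hK.norm_le z (norm_pos_iff.1 (one_pos.trans_le hz1))).trans ?_
  exact mul_le_of_le_one_right A.coe_nonneg (div_le_one_of_le₀ (one_le_pow₀ hz1) (by positivity))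

lemma integrable_smul_incrementMajorant (hρ : Integrable ρ μ) (hP : ∀ᵐ y ∂μ, ‖ρ y‖ ≤ P)
    (hd : 0 ≤ d) (x : E) :
    Integrable (fun y ↦ ρ y • incrementMajorant (finrank ℝ E) d ‖x - y‖) μ := by
  refine integrable_smul_comp_sub_left (K := fun z ↦ incrementMajorant (finrank ℝ E) d ‖z‖)
    hρ hP ?_ measurableSet_ball (integrableOn_ball_incrementMajorant μ hd) hd
    (norm_incrementMajorant_norm_le_of_notMem_ball _ hd) x
  unfold incrementMajorant
  exact (by fun_prop : Measurable _).aestronglyMeasurable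

lemma integral_norm_smul_incrementMajorant_le (hρ : Integrable ρ μ) (hP : ∀ᵐ y ∂μ, ‖ρ y‖ ≤ M)
    (hQ : ∫ y, ‖ρ y‖ ∂μ ≤ M) (hd : 0 < d) (x : E) :
    ∫ y, ‖ρ y • incrementMajorant (finrank ℝ E) d ‖x - y‖‖ ∂μ ≤
      (2 * (finrank ℝ E * μ.real (ball 0 1)) + 1) * M * (d * max 1 (-log d)) :=
  calc ∫ y, ‖ρ y • incrementMajorant (finrank ℝ E) d ‖x - y‖‖ ∂μ
      ≤ M * ∫ z in ball (0 : E) 1, ‖incrementMajorant (finrank ℝ E) d ‖z‖‖ ∂μ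
        + d * ∫ y, ‖ρ y‖ ∂μ :=
        integral_norm_smul_comp_sub_left_le
          (K := fun z ↦ incrementMajorant (finrank ℝ E) d ‖z‖) hρ hP measurableSet_ball
          (integrableOn_ball_incrementMajorant μ hd.le) hd.le
          (norm_incrementMajorant_norm_le_of_notMem_ball _ hd.le) x
    _ = M * ∫ z in ball (0 : E) 1, incrementMajorant (finrank ℝ E) d ‖z‖ ∂μ
        + d * ∫ y, ‖ρ y‖ ∂μ := by
        simp only [norm_of_nonneg (incrementMajorant_nonneg _ hd.le (norm_nonneg _))]
    _ ≤ M * (2 * (finrank ℝ E * μ.real (ball 0 1)) * (d * max 1 (-log d)))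
        + d * max 1 (-log d) * M := by
        gcongr
        · exact setIntegral_ball_incrementMajorant_le μ hd
        · exact le_mul_of_one_le_right hd.le (le_max_left _ _)
    _ = (2 * (finrank ℝ E * μ.real (ball 0 1)) + 1) * M * (d * max 1 (-log d)) := by ring

lemma IsCoulombKernel.ae_norm_smul_comp_sub_left_sub_le {A : ℝ≥0} {K : E → F}
    (hK : IsCoulombKernel A K) (ρ : E → ℝ) (x₁ x₂ : E) :
    ∀ᵐ y ∂μ, ‖ρ y • K (x₁ - y) - ρ y • K (x₂ - y)‖ ≤
      2 * A * (‖ρ y • incrementMajorant (finrank ℝ E) ‖x₁ - x₂‖ ‖x₁ - y‖‖ +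
        ‖ρ y • incrementMajorant (finrank ℝ E) ‖x₁ - x₂‖ ‖x₂ - y‖‖) := by
  filter_upwards [Measure.ae_ne μ x₁, Measure.ae_ne μ x₂] with y h₁ h₂
  have h := hK.norm_sub_le_incrementMajorant (sub_ne_zero.2 h₁.symm) (sub_ne_zero.2 h₂.symm)
  rw [sub_sub_sub_cancel_right] at h
  rw [← smul_sub, norm_smul]
  refine (mul_le_mul_of_nonneg_left h (norm_nonneg (ρ y))).trans_eq ?_
  simp only [norm_smul,
    norm_of_nonneg (incrementMajorant_nonneg _ (norm_nonneg (x₁ - x₂)) (norm_nonneg _))]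
  ring

theorem force_log_lipschitz_general {A : ℝ≥0} {K : E → F} (hK : IsCoulombKernel A K)
    (hρ : AEStronglyMeasurable ρ μ) (hM : eLpNorm ρ 1 μ + eLpNorm ρ ∞ μ ≤ M)
    {x₁ x₂ : E} (hne : x₁ ≠ x₂) :
    ‖(∫ y, ρ y • K (x₁ - y) ∂μ) - ∫ y, ρ y • K (x₂ - y) ∂μ‖ ≤
      4 * A * ((2 * (finrank ℝ E * μ.real (ball 0 1)) + 1) * M) * ‖x₁ - x₂‖ *
        max 1 (-log ‖x₁ - x₂‖) := by
  have hM1 : eLpNorm ρ 1 μ ≤ M := le_self_add.trans hM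
  have hint : Integrable ρ μ := memLp_one_iff_integrable.1 ⟨hρ, hM1.trans_lt ENNReal.coe_lt_top⟩
  have hQ : ∫ y, ‖ρ y‖ ∂μ ≤ M := integral_norm_le_of_eLpNorm_one_le hρ hM1
  have hP : ∀ᵐ y ∂μ, ‖ρ y‖ ≤ M := ae_norm_le_of_eLpNorm_top_le (le_add_self.trans hM)
  have hd : 0 < ‖x₁ - x₂‖ := norm_pos_iff.2 (sub_ne_zero.2 hne)
  let m (x y : E) : ℝ := ρ y • incrementMajorant (finrank ℝ E) ‖x₁ - x₂‖ ‖x - y‖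
  have hm (x : E) : Integrable (m x) μ := integrable_smul_incrementMajorant hint hP hd.le x
  have hm_le (x : E) := integral_norm_smul_incrementMajorant_le hint hP hQ hd x
  calc ‖(∫ y, ρ y • K (x₁ - y) ∂μ) - ∫ y, ρ y • K (x₂ - y) ∂μ‖
      = ‖∫ y, (ρ y • K (x₁ - y) - ρ y • K (x₂ - y)) ∂μ‖ := by
        rw [integral_sub (hK.integrable_smul_comp_sub_left hint hP x₁)
          (hK.integrable_smul_comp_sub_left hint hP x₂)]
    _ ≤ ∫ y, 2 * A * (‖m x₁ y‖ + ‖m x₂ y‖) ∂μ :=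
        norm_integral_le_of_norm_le (((hm x₁).norm.add (hm x₂).norm).const_mul _)
          (hK.ae_norm_smul_comp_sub_left_sub_le ρ x₁ x₂)
    _ = 2 * A * (∫ y, ‖m x₁ y‖ ∂μ + ∫ y, ‖m x₂ y‖ ∂μ) := by
        rw [integral_const_mul, integral_add (hm x₁).norm (hm x₂).norm]
    _ ≤ 2 * A * (2 * ((2 * (finrank ℝ E * μ.real (ball 0 1)) + 1) * M *
          (‖x₁ - x₂‖ * max 1 (-log ‖x₁ - x₂‖)))) := by
        gcongr
        exact (add_le_add (hm_le x₁) (hm_le x₂)).trans_eq (two_mul _).symm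
    _ = _ := by ring

end LogLipschitz

/-- **Log-Lipschitz regularity of the Coulomb force field:** if `ρ ∈ L¹ ∩ L^∞(ℝ³)` is
nonnegative, then `E = ∇K ∗ ρ` satisfies
`|E(x₁) - E(x₂)| ≤ C |x₁-x₂| max(1, -ln|x₁-x₂|)` with `C` depending only on
`‖ρ‖_{L¹} + ‖ρ‖_{L^∞}`. -/
theorem force_log_lipschitz (σ : ℝ) (hσ : σ = 1 ∨ σ = -1) :
    ∀ M > (0:ℝ), ∃ C > (0:ℝ), ∀ ρ : E3 → ℝ, Measurable ρ → (∀ x, 0 ≤ ρ x) →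
      eLpNorm ρ 1 volume + eLpNorm ρ ⊤ volume ≤ ENNReal.ofReal M →
      ∀ x₁ x₂ : E3, x₁ ≠ x₂ →
        ‖(∫ y : E3, ρ y • gradK σ (x₁ - y)) - ∫ y : E3, ρ y • gradK σ (x₂ - y)‖ ≤
          C * ‖x₁ - x₂‖ * max 1 (-Real.log ‖x₁ - x₂‖) := by
  intro M hM
  have hσ₀ : 0 < ‖σ‖₊ := by rcases hσ with rfl | rfl <;> simp
  refine ⟨_, ?_, fun ρ hρ _ hρM x₁ x₂ hne ↦ force_log_lipschitz_general (isCoulombKernel_gradK σ)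
    hρ.aestronglyMeasurable hρM hne⟩
  positivity
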